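/- Let Λ and Σ be symmetric positive definite n×n real matrices, σ > 0, σ_v > 0, μ ∈ ℝⁿ, distinct inducing inputs w̆₁, …, w̆_M ∈ ℝⁿ, and training inputs w₁, …, w_N ∈ ℝⁿ. Define κ_d(w, w′) = σ² exp(−(1/2)(w−w′)ᵀΛ⁻¹(w−w′)), the M×M matrix K with [K]_{τ,τ̃} = κ_d(w̆_τ, w̆_{τ̃}) + δ_{τ,τ̃} σ_v² (δ the Kronecker delta), the M×N matrix B with [B]_{τ,n} = κ_d(w̆_τ, w_n), and S = K + σ_v^{−2} B Bᵀ, and assume K and S are invertible. Define the kernel slice k(w) ∈ ℝᴹ by k(w)_τ = κ_d(w, w̆_τ) and the sparse predictive variance σ̆²(w) = σ² + σ_v² − k(w)ᵀ(K⁻¹ − S⁻¹)k(w). Then ∫_{ℝⁿ} σ̆²(w) ρ_{μ,Σ}(w) dw = σ² + σ_v² − Tr((K⁻¹ − S⁻¹) L), where the M×M matrix L has entries [L]_{τ,τ̃} = σ⁴ det(2Λ⁻¹Σ + I)^{−1/2} exp(−(1/4)(w̆_τ−w̆_{τ̃})ᵀΛ⁻¹(w̆_τ−w̆_{τ̃}))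 exp(−(1/2)(q_{τ,τ̃}−μ)ᵀ(Λ/2 + Σ)⁻¹(q_{τ,τ̃}−μ)) with q_{τ,τ̃} = (w̆_τ + w̆_{τ̃})/2. -/

import Mathlib

/-!
Expanding the quadratic form `k(w)ᵀ (K⁻¹ - S⁻¹) k(w)` and integrating termwise reduces the claim to
`∫ ρ = 1` and to identifying `∫ κ(w, a) κ(w, b) ρ(w) dw`, for inducing inputs `a` and `b`, with the
corresponding entry of `L` (`kernel_product_integral`). There the three exponents
combine by completing the square twice: first the two kernels merge into a Gaussian centred at the midpoint of
`a` and `b` (`quad_midpoint`), which then merges with the density (`quad_complete`). What is left is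
the Gaussian integral `∫ exp (-xᵀPx / 2) = (2π)^(n/2) det(P)^(-1/2)` (`gaussian_integral`), obtained
from the one-dimensional one by factoring `P = RᵀR` and changing variables, together with
`(2Λ⁻¹ + Σ⁻¹) Σ = 2Λ⁻¹Σ + 1` for the determinants.
-/

open MeasureTheory Matrix
open scoped Matrix

/-- The Gaussian probability density on `ℝⁿ` with mean `μ` and covariance `S`. -/
noncomputable def gaussDensity {n : ℕ} (μ : Fin n → ℝ) (S : Matrix (Fin n) (Fin n) ℝ)
    (w : Fin n → ℝ) : ℝ :=
  (2 * Real.pi) ^ (-(n : ℝ) / 2) * S.det ^ (-(1 : ℝ) / 2) *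
    Real.exp (-(1 / 2) * ((w - μ) ⬝ᵥ (S⁻¹ *ᵥ (w - μ))))

/-- The squared-exponential kernel with signal variance `σ²` and length-scale matrix `Λ`. -/
noncomputable def seKernel {n : ℕ} (σ : ℝ) (Λ : Matrix (Fin n) (Fin n) ℝ)
    (w w' : Fin n → ℝ) : ℝ :=
  σ ^ 2 * Real.exp (-(1 / 2) * ((w - w') ⬝ᵥ (Λ⁻¹ *ᵥ (w - w'))))

open scoped MatrixOrder in
lemma posDef_factor {n : ℕ} {P : Matrix (Fin n) (Fin n) ℝ} (hP : P.PosDef) :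
    ∃ R : Matrix (Fin n) (Fin n) ℝ, P = Rᵀ * R := by
  obtain ⟨R, hR⟩ := CStarAlgebra.nonneg_iff_eq_star_mul_self.mp hP.posSemidef.nonneg
  exact ⟨R, by rw [hR, star_eq_conjTranspose, conjTranspose_eq_transpose_of_trivial]⟩

lemma std_gaussian (n : ℕ) :
    Integrable (fun w : Fin n → ℝ => Real.exp (-(1 / 2) * (w ⬝ᵥ w))) ∧
    ∫ w : Fin n → ℝ, Real.exp (-(1 / 2) * (w ⬝ᵥ w)) = (2 * Real.pi) ^ ((n : ℝ) / 2) := by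
  have h : (fun w : Fin n → ℝ => Real.exp (-(1 / 2) * (w ⬝ᵥ w))) =
      fun w => ∏ i, Real.exp (-(1 / 2) * (w i) ^ 2) := by
    funext w
    rw [← Real.exp_sum, dotProduct, Finset.mul_sum]
    simp only [sq]
  rw [h]
  constructor
  · exact Integrable.fintype_prod
      (f := fun (_ : Fin n) (x : ℝ) => Real.exp (-(1 / 2) * x ^ 2))
      (fun _ => integrable_exp_neg_mul_sq (by norm_num))
  · rw [integral_fintype_prod_volume_eq_pow (fun x : ℝ => Real.exp (-(1 / 2) * x ^ 2)),
      integral_gaussian, Fintype.card_fin, Real.sqrt_eq_rpow, ← Real.rpow_natCast,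
      ← Real.rpow_mul (by positivity)]
    congr 1 <;> ring

lemma gaussian_integral {n : ℕ} {P : Matrix (Fin n) (Fin n) ℝ} (hP : P.PosDef) :
    Integrable (fun w : Fin n → ℝ => Real.exp (-(1 / 2) * (w ⬝ᵥ (P *ᵥ w)))) ∧
    ∫ w : Fin n → ℝ, Real.exp (-(1 / 2) * (w ⬝ᵥ (P *ᵥ w))) =
      (2 * Real.pi) ^ ((n : ℝ) / 2) * P.det ^ (-(1 : ℝ) / 2) := by
  obtain ⟨R, hR⟩ := posDef_factor hP
  have hdet : P.det = R.det ^ 2 := by rw [hR, det_mul, det_transpose, sq]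
  have hpos := hP.det_pos
  have hR0 : R.det ≠ 0 := by
    intro h
    rw [hdet, h] at hpos
    norm_num at hpos
  have hform : ∀ w, w ⬝ᵥ (P *ᵥ w) = toLin' R w ⬝ᵥ toLin' R w := by
    intro w
    rw [hR, toLin'_apply, ← mulVec_mulVec, dotProduct_mulVec, vecMul_transpose]
  have hemb : MeasurableEmbedding (toLin' R) := by
    refine Continuous.measurableEmbedding (LinearMap.continuous_on_pi _) ?_
    have := mulVec_injective_iff_isUnit.mpr ((isUnit_iff_isUnit_det R).mpr hR0.isUnit)
    exact this
  obtain ⟨hi, hv⟩ := std_gaussian n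
  have hmap := Real.map_matrix_volume_pi_eq_smul_volume_pi hR0
  simp only [hform]
  constructor
  · have : Integrable (fun w : Fin n → ℝ => Real.exp (-(1 / 2) * (w ⬝ᵥ w)))
        (Measure.map (toLin' R) volume) := by
      rw [hmap]
      exact hi.smul_measure ENNReal.ofReal_ne_top
    exact hemb.integrable_map_iff.mp this
  · rw [← hemb.integral_map (fun w : Fin n → ℝ => Real.exp (-(1 / 2) * (w ⬝ᵥ w))), hmap,
      integral_smul_measure, hv, ENNReal.toReal_ofReal (abs_nonneg _), smul_eq_mul, mul_comm]
    congr 1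
    rw [hdet, neg_div, Real.rpow_neg (sq_nonneg _), ← Real.sqrt_eq_rpow, Real.sqrt_sq_eq_abs,
      abs_inv]

lemma dot_symm {n : ℕ} {A : Matrix (Fin n) (Fin n) ℝ} (hA : A.PosDef) (x y : Fin n → ℝ) :
    x ⬝ᵥ (A *ᵥ y) = y ⬝ᵥ (A *ᵥ x) := by
  have h : Aᵀ = A := by
    rw [← conjTranspose_eq_transpose_of_trivial]; exact hA.isHermitian
  rw [dotProduct_mulVec, ← mulVec_transpose, h, dotProduct_comm]

/-- Parallelogram law: the exponents of two kernels merge into one centred at the midpoint. -/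
lemma quad_midpoint {n : ℕ} {A : Matrix (Fin n) (Fin n) ℝ} (hA : A.PosDef) (w a b : Fin n → ℝ) :
    (w - a) ⬝ᵥ (A *ᵥ (w - a)) + (w - b) ⬝ᵥ (A *ᵥ (w - b)) =
      2 * ((w - (1 / 2 : ℝ) • (a + b)) ⬝ᵥ (A *ᵥ (w - (1 / 2 : ℝ) • (a + b)))) +
        (1 / 2) * ((a - b) ⬝ᵥ (A *ᵥ (a - b))) := by
  simp only [mulVec_sub, mulVec_add, mulVec_smul, dotProduct_sub, sub_dotProduct, dotProduct_add,
    add_dotProduct, dotProduct_smul, smul_dotProduct, smul_eq_mul]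
  rw [dot_symm hA a w, dot_symm hA b w, dot_symm hA b a]
  ring

/-- Completing the square in a sum of two quadratic forms with matrices `2Λ⁻¹` and `Σ⁻¹`. The new
centre is `μ + Σ e`, where `(Λ/2 + Σ) e = q - μ`. -/
lemma quad_complete {n : ℕ} {Λ Sig : Matrix (Fin n) (Fin n) ℝ} (hΛ : Λ.PosDef) (hSig : Sig.PosDef)
    (q μ : Fin n → ℝ) : ∃ m : Fin n → ℝ, ∀ w,
    2 * ((w - q) ⬝ᵥ (Λ⁻¹ *ᵥ (w - q))) + (w - μ) ⬝ᵥ (Sig⁻¹ *ᵥ (w - μ)) =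
      (w - m) ⬝ᵥ (((2 : ℝ) • Λ⁻¹ + Sig⁻¹) *ᵥ (w - m)) +
        (q - μ) ⬝ᵥ (((2 : ℝ)⁻¹ • Λ + Sig)⁻¹ *ᵥ (q - μ)) := by
  have hC : ((2 : ℝ)⁻¹ • Λ + Sig).PosDef := (hΛ.smul (by norm_num : (0 : ℝ) < 2⁻¹)).add hSig
  have hΛu : IsUnit Λ.det := hΛ.det_pos.ne'.isUnit
  have hSu : IsUnit Sig.det := hSig.det_pos.ne'.isUnit
  have hCu : IsUnit ((2 : ℝ)⁻¹ • Λ + Sig).det := hC.det_pos.ne'.isUnit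
  set e := ((2 : ℝ)⁻¹ • Λ + Sig)⁻¹ *ᵥ (q - μ) with he
  have hd : q - μ = (2 : ℝ)⁻¹ • (Λ *ᵥ e) + Sig *ᵥ e := by
    rw [← smul_mulVec, ← add_mulVec, he, mulVec_mulVec, mul_nonsing_inv _ hCu, one_mulVec]
  refine ⟨μ + Sig *ᵥ e, fun w => ?_⟩
  obtain ⟨y, hy⟩ : ∃ y, y = w - (μ + Sig *ᵥ e) := ⟨_, rfl⟩
  have h1 : w - μ = y + Sig *ᵥ e := by rw [hy]; abel
  have h2 : w - q = y - (2 : ℝ)⁻¹ • (Λ *ᵥ e) := by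
    have : w - q = (w - μ) - (q - μ) := by abel
    rw [this, h1, hd]; abel
  have hl : Λ⁻¹ *ᵥ (Λ *ᵥ e) = e := by rw [mulVec_mulVec, nonsing_inv_mul _ hΛu, one_mulVec]
  have hs : Sig⁻¹ *ᵥ (Sig *ᵥ e) = e := by rw [mulVec_mulVec, nonsing_inv_mul _ hSu, one_mulVec]
  rw [← hy, h1, h2, hd]
  simp only [mulVec_sub, mulVec_add, mulVec_smul, dotProduct_sub, sub_dotProduct, dotProduct_add,
    add_dotProduct, dotProduct_smul, smul_dotProduct, smul_eq_mul, add_mulVec, smul_mulVec, hl, hs]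
  rw [dot_symm hΛ.inv (Λ *ᵥ e) y, dot_symm hSig.inv (Sig *ᵥ e) y, hl, hs]
  ring

lemma gaussDensity_integral {n : ℕ} {Sig : Matrix (Fin n) (Fin n) ℝ} (hSig : Sig.PosDef)
    (μ : Fin n → ℝ) :
    Integrable (gaussDensity μ Sig) ∧ ∫ w, gaussDensity μ Sig w = 1 := by
  obtain ⟨hi, hv⟩ := gaussian_integral hSig.inv
  have hpos := hSig.det_pos
  constructor
  · exact (hi.comp_sub_right μ).const_mul _
  · unfold gaussDensity
    rw [integral_const_mul, integral_sub_right_eq_self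
      (fun w : Fin n → ℝ => Real.exp (-(1 / 2) * (w ⬝ᵥ (Sig⁻¹ *ᵥ w)))) μ, hv,
      det_nonsing_inv, Ring.inverse_eq_inv', Real.inv_rpow hpos.le, neg_div,
      Real.rpow_neg (by positivity : (0 : ℝ) ≤ 2 * Real.pi)]
    have h1 : (2 * Real.pi) ^ ((n : ℝ) / 2) ≠ 0 := by positivity
    have h2 : Sig.det ^ (-(1 : ℝ) / 2) ≠ 0 := by positivity
    field_simp

/-- Second-order kernel expectation: the integral of a product of two kernel slices against the
Gaussian density. -/
lemma kernel_product_integral {n : ℕ} {Λ Sig : Matrix (Fin n) (Fin n) ℝ} (hΛ : Λ.PosDef)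
    (hSig : Sig.PosDef) (σ : ℝ) (μ a b : Fin n → ℝ) :
    Integrable (fun w => seKernel σ Λ w a * seKernel σ Λ w b * gaussDensity μ Sig w) ∧
    ∫ w, seKernel σ Λ w a * seKernel σ Λ w b * gaussDensity μ Sig w =
      σ ^ 4 * (((2 : ℝ) • (Λ⁻¹ * Sig) + 1).det) ^ (-(1 : ℝ) / 2) *
        Real.exp (-(1 / 4) * ((a - b) ⬝ᵥ (Λ⁻¹ *ᵥ (a - b)))) *
        Real.exp (-(1 / 2) *
          ((((1 / 2 : ℝ) • (a + b)) - μ) ⬝ᵥ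
            (((2 : ℝ)⁻¹ • Λ + Sig)⁻¹ *ᵥ (((1 / 2 : ℝ) • (a + b)) - μ)))) := by
  have hP : ((2 : ℝ) • Λ⁻¹ + Sig⁻¹).PosDef :=
    (hΛ.inv.smul (by norm_num : (0 : ℝ) < 2)).add hSig.inv
  obtain ⟨m, hm⟩ := quad_complete hΛ hSig ((1 / 2 : ℝ) • (a + b)) μ
  obtain ⟨hi, hv⟩ := gaussian_integral hP
  have hdet : ((2 : ℝ) • (Λ⁻¹ * Sig) + 1).det = ((2 : ℝ) • Λ⁻¹ + Sig⁻¹).det * Sig.det := by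
    rw [← det_mul, add_mul, smul_mul_assoc, nonsing_inv_mul _ hSig.det_pos.ne'.isUnit]
  set E1 := Real.exp (-(1 / 4) * ((a - b) ⬝ᵥ (Λ⁻¹ *ᵥ (a - b)))) with hE1
  set E2 := Real.exp (-(1 / 2) *
          ((((1 / 2 : ℝ) • (a + b)) - μ) ⬝ᵥ
            (((2 : ℝ)⁻¹ • Λ + Sig)⁻¹ *ᵥ (((1 / 2 : ℝ) • (a + b)) - μ)))) with hE2
  have hfun : (fun w => seKernel σ Λ w a * seKernel σ Λ w b * gaussDensity μ Sig w) = fun w =>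
      (σ ^ 4 * ((2 * Real.pi) ^ (-(n : ℝ) / 2) * Sig.det ^ (-(1 : ℝ) / 2)) * E1 * E2) *
        Real.exp (-(1 / 2) * ((w - m) ⬝ᵥ (((2 : ℝ) • Λ⁻¹ + Sig⁻¹) *ᵥ (w - m)))) := by
    funext w
    have hexp : Real.exp (-(1 / 2) * ((w - a) ⬝ᵥ (Λ⁻¹ *ᵥ (w - a)))) *
        Real.exp (-(1 / 2) * ((w - b) ⬝ᵥ (Λ⁻¹ *ᵥ (w - b)))) *
        Real.exp (-(1 / 2) * ((w - μ) ⬝ᵥ (Sig⁻¹ *ᵥ (w - μ)))) = E1 * E2 *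
        Real.exp (-(1 / 2) * ((w - m) ⬝ᵥ (((2 : ℝ) • Λ⁻¹ + Sig⁻¹) *ᵥ (w - m)))) := by
      rw [hE1, hE2]
      simp only [← Real.exp_add]
      congr 1
      linarith [hm w, quad_midpoint hΛ.inv w a b]
    unfold seKernel gaussDensity
    linear_combination
      (σ ^ 4 * ((2 * Real.pi) ^ (-(n : ℝ) / 2) * Sig.det ^ (-(1 : ℝ) / 2))) * hexp
  rw [hfun]
  constructor
  · exact (hi.comp_sub_right m).const_mul _
  · rw [integral_const_mul, integral_sub_right_eq_self
      (fun w : Fin n → ℝ => Real.exp (-(1 / 2) * (w ⬝ᵥ (((2 : ℝ) • Λ⁻¹ + Sig⁻¹) *ᵥ w)))) m, hv,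
      hdet, Real.mul_rpow hP.det_pos.le hSig.det_pos.le, neg_div,
      Real.rpow_neg (by positivity : (0 : ℝ) ≤ 2 * Real.pi)]
    have h1 : (2 * Real.pi) ^ ((n : ℝ) / 2) ≠ 0 := by positivity
    field_simp

/-- Expected sparse GP posterior predictive variance under a Gaussian input
`w ~ N(μ, Σ)`: the trace-correction term of the sparse moment-matching variance. -/
theorem sparse_gp_expected_variance (n M N : ℕ)
    (Λ Sig : Matrix (Fin n) (Fin n) ℝ) (hΛ : Λ.PosDef) (hSig : Sig.PosDef)
    (σ σv : ℝ) (hσ : 0 < σ) (hσv : 0 < σv) (μ : Fin n → ℝ)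
    (wi : Fin M → Fin n → ℝ) (hwi : Function.Injective wi)
    (wt : Fin N → Fin n → ℝ)
    (K : Matrix (Fin M) (Fin M) ℝ)
    (hK : ∀ τ τ' : Fin M, K τ τ' = seKernel σ Λ (wi τ) (wi τ') + (if τ = τ' then σv ^ 2 else 0))
    (B : Matrix (Fin M) (Fin N) ℝ)
    (hB : ∀ (τ : Fin M) (m : Fin N), B τ m = seKernel σ Λ (wi τ) (wt m))
    (S : Matrix (Fin M) (Fin M) ℝ)
    (hS : S = K + (σv ^ 2)⁻¹ • (B * Bᵀ))
    (hKinv : IsUnit K.det) (hSinv : IsUnit S.det)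
    (L : Matrix (Fin M) (Fin M) ℝ)
    (hL : ∀ τ τ' : Fin M, L τ τ' =
      σ ^ 4 * (((2 : ℝ) • (Λ⁻¹ * Sig) + 1).det) ^ (-(1 : ℝ) / 2) *
        Real.exp (-(1 / 4) * ((wi τ - wi τ') ⬝ᵥ (Λ⁻¹ *ᵥ (wi τ - wi τ')))) *
        Real.exp (-(1 / 2) *
          ((((1 / 2 : ℝ) • (wi τ + wi τ')) - μ) ⬝ᵥ
            (((2 : ℝ)⁻¹ • Λ + Sig)⁻¹ *ᵥ (((1 / 2 : ℝ) • (wi τ + wi τ')) - μ))))) :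
    (∫ w : Fin n → ℝ,
        (σ ^ 2 + σv ^ 2 -
          (fun τ => seKernel σ Λ w (wi τ)) ⬝ᵥ ((K⁻¹ - S⁻¹) *ᵥ (fun τ => seKernel σ Λ w (wi τ)))) *
          gaussDensity μ Sig w)
      = σ ^ 2 + σv ^ 2 - Matrix.trace ((K⁻¹ - S⁻¹) * L) := by
  have hLint : ∀ τ τ', L τ τ' = ∫ w, seKernel σ Λ w (wi τ) * seKernel σ Λ w (wi τ') *
      gaussDensity μ Sig w := fun τ τ' => by
    rw [hL, (kernel_product_integral hΛ hSig σ μ (wi τ) (wi τ')).2]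
  obtain ⟨hρi, hρ⟩ := gaussDensity_integral hSig μ
  generalize K⁻¹ - S⁻¹ = D
  have hfun : (fun w : Fin n → ℝ => (σ ^ 2 + σv ^ 2 -
      (fun τ => seKernel σ Λ w (wi τ)) ⬝ᵥ (D *ᵥ (fun τ => seKernel σ Λ w (wi τ)))) *
        gaussDensity μ Sig w) = fun w => (σ ^ 2 + σv ^ 2) * gaussDensity μ Sig w -
      ∑ τ, ∑ τ', D τ τ' *
        (seKernel σ Λ w (wi τ') * seKernel σ Λ w (wi τ) * gaussDensity μ Sig w) := by
    funext w
    rw [sub_mul]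
    congr 1
    simp only [dotProduct, mulVec, Finset.mul_sum, Finset.sum_mul]
    exact Finset.sum_congr rfl fun τ _ => Finset.sum_congr rfl fun τ' _ => by ring
  have hint : ∀ τ τ', Integrable fun w => D τ τ' *
      (seKernel σ Λ w (wi τ') * seKernel σ Λ w (wi τ) * gaussDensity μ Sig w) := fun τ τ' =>
    (kernel_product_integral hΛ hSig σ μ (wi τ') (wi τ)).1.const_mul _
  rw [hfun, integral_sub (hρi.const_mul _)
    (integrable_finsetSum _ fun τ _ => integrable_finsetSum _ fun τ' _ => hint τ τ'),
    integral_const_mul, hρ, mul_one,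
    integral_finsetSum _ fun τ _ => integrable_finsetSum _ fun τ' _ => hint τ τ']
  congr 1
  simp only [trace, diag_apply, mul_apply]
  refine Finset.sum_congr rfl fun τ _ => ?_
  rw [integral_finsetSum _ fun τ' _ => hint τ τ']
  refine Finset.sum_congr rfl fun τ' _ => ?_
  rw [integral_const_mul, hLint]
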